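/- arXiv:2311.03091 — 5 statements merged into one kernel-verified Lean document; each statement's English description precedes it below -/
import Mathlib

section
/- Let V, X₁, U be real Hilbert spaces, j : V → X₁ an injective bounded linear map with dense range, V* the dual of V, ι : X₁ → V* the embedding (ι x)(v) = ⟨x, j v⟩, A₀ : V → V*, B₀ : U → V* bounded, B₀* : V → U defined by ⟨B₀* v, u⟩ = (B₀ u)(v), and D₀ : U → U bounded. Let A be the operator on X₁ × U with domain D(A) = {(j v, u) : v ∈ V, u ∈ U, A₀ v + B₀ u ∈ ran ι} and action A(j v, u) = (ι⁻¹(A₀ v + B₀ u), −B₀* v − D₀ u), and let E_I(x, u) = (x, 0). Assume: D₀ is self-adjoint with ⟨D₀ u, u⟩ ≥ 0 for all u; A₀ is dissipative ((A₀ v)(v) ≤ 0 for all v) and satisfies the Gårding inequality ‖j v‖²_{X₁} + |(A₀ v)(v)| ≥ α‖v‖²_V for some α > 0 and all v ∈ V; and B₀ has closed range in the sense that there exists β > 0 with ‖B₀ u‖_{V*} ≥ β‖u‖_U for all u ∈ U. Then E_I − A, with domain D(A), is boundedly invertible on X₁ × U. -/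
/-!
Put `M = ι ∘ j - A₀ : V → V*`. Eliminating `w = j v - y₁`, the equation `(E_I - A)(j v, u) = y`
becomes the system `M v - B₀ u = ι y₁`, `B₀* v + D₀ u = y₂`. By dissipativity and the Gårding
inequality `M` is coercive, hence an isomorphism by Lax–Milgram, so that `v = M⁻¹ (ι y₁ + B₀ u)` and
`S u = y₂ - B₀* M⁻¹ ι y₁` with the Schur complement `S = B₀* M⁻¹ B₀ + D₀` on `U`.

The operator `S` is coercive as well: with `z = M⁻¹ B₀ u`,
`⟪S u, u⟫ ≥ (B₀ u)(z) = (M z)(z) ≥ α ‖z‖²`, and `β ‖u‖ ≤ ‖B₀ u‖ = ‖M z‖ ≤ ‖M‖ ‖z‖`.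
A second use of Lax–Milgram inverts `S`, so `(v, u)` is a bounded linear function of `y`
(`exists_solution_operator`), from which all three claims follow.
-/

noncomputable section

open scoped RealInnerProductSpace

variable {V X₁ U : Type*}
  [NormedAddCommGroup V] [InnerProductSpace ℝ V] [CompleteSpace V]
  [NormedAddCommGroup X₁] [InnerProductSpace ℝ X₁] [CompleteSpace X₁]
  [NormedAddCommGroup U] [InnerProductSpace ℝ U] [CompleteSpace U]

/-- Lax–Milgram, as an isomorphism onto the dual space. -/
lemma exists_equiv_dual_of_coercive {H : Type*} [NormedAddCommGroup H] [InnerProductSpace ℝ H]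
    [CompleteSpace H] (B : H →L[ℝ] (H →L[ℝ] ℝ)) (hB : IsCoercive B) :
    ∃ e : H ≃L[ℝ] (H →L[ℝ] ℝ), ∀ x, e x = B x := by
  refine ⟨hB.continuousLinearEquivOfBilin.trans
    (InnerProductSpace.toDual ℝ H).toContinuousLinearEquiv, fun x => ?_⟩
  ext y
  exact hB.continuousLinearEquivOfBilin_apply x y

/-- The Schur complement `B₀* M⁻¹ B₀ + D₀` is coercive when `M` is coercive, `B₀` is bounded
below and `D₀` is nonnegative. -/
lemma schur_isCoercive
    (M : V ≃L[ℝ] (V →L[ℝ] ℝ)) (B₀ : U →L[ℝ] (V →L[ℝ] ℝ))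
    (B₀s : V →L[ℝ] U) (hB₀s : ∀ (v : V) (u : U), ⟪B₀s v, u⟫ = B₀ u v)
    (D₀ : U →L[ℝ] U) (hD₀nn : ∀ u : U, 0 ≤ ⟪D₀ u, u⟫)
    (α : ℝ) (hα : 0 < α) (hM : ∀ v : V, α * ‖v‖ ^ 2 ≤ M v v)
    (β : ℝ) (hβ : 0 < β) (hB₀cr : ∀ u : U, β * ‖u‖ ≤ ‖B₀ u‖) :
    IsCoercive ((innerSL ℝ : U →L[ℝ] (U →L[ℝ] ℝ)) ∘L
      (B₀s ∘L (M.symm : (V →L[ℝ] ℝ) →L[ℝ] V) ∘L B₀ + D₀)) := by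
  -- `K` replaces `‖M‖`, which vanishes when `V` is trivial.
  set K : ℝ := ‖(M : V →L[ℝ] (V →L[ℝ] ℝ))‖ + 1 with hK
  have hKpos : 0 < K := by positivity
  refine ⟨α * (β / K) ^ 2, by positivity, fun u => ?_⟩
  set z := M.symm (B₀ u) with hz
  have hMz : M z = B₀ u := by simp [hz]
  have h1 : β * ‖u‖ ≤ K * ‖z‖ := by
    have h2 := (M : V →L[ℝ] (V →L[ℝ] ℝ)).le_opNorm z
    have h3 := hB₀cr u
    rw [← hMz] at h3
    simp only [ContinuousLinearEquiv.coe_coe] at h2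
    nlinarith [norm_nonneg z]
  have h4 : β / K * ‖u‖ ≤ ‖z‖ := by
    rw [div_mul_eq_mul_div, div_le_iff₀ hKpos]
    linarith
  have h5 : (β / K * ‖u‖) ^ 2 ≤ ‖z‖ ^ 2 := by gcongr
  have h6 := hM z
  rw [hMz] at h6
  have h7 := hD₀nn u
  calc α * (β / K) ^ 2 * ‖u‖ * ‖u‖ = α * (β / K * ‖u‖) ^ 2 := by ring
    _ ≤ α * ‖z‖ ^ 2 := by gcongr
    _ ≤ B₀ u z + ⟪D₀ u, u⟫ := by linarith
    _ = ⟪B₀s z + D₀ u, u⟫ := by rw [inner_add_left, hB₀s]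
    _ = _ := rfl

/-- The operator `L` sends `y` to the unique `(v, u)` with `(E_I - A)(j v, u) = y`. -/
lemma exists_solution_operator
    (j : V →L[ℝ] X₁)
    (ι : X₁ →L[ℝ] (V →L[ℝ] ℝ)) (hι : ∀ (x : X₁) (v : V), ι x v = ⟪x, j v⟫)
    (A₀ : V →L[ℝ] (V →L[ℝ] ℝ)) (B₀ : U →L[ℝ] (V →L[ℝ] ℝ))
    (B₀s : V →L[ℝ] U) (hB₀s : ∀ (v : V) (u : U), ⟪B₀s v, u⟫ = B₀ u v)
    (D₀ : U →L[ℝ] U) (hD₀nn : ∀ u : U, 0 ≤ ⟪D₀ u, u⟫)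
    (hA₀ : ∀ v : V, A₀ v v ≤ 0)
    (α : ℝ) (hα : 0 < α) (hG : ∀ v : V, α * ‖v‖ ^ 2 ≤ ‖j v‖ ^ 2 + |A₀ v v|)
    (β : ℝ) (hβ : 0 < β) (hB₀cr : ∀ u : U, β * ‖u‖ ≤ ‖B₀ u‖) :
    ∃ L : X₁ × U →L[ℝ] V × U, ∀ (y : X₁ × U) (v : V) (u : U),
      (ι (j v - y.1) = A₀ v + B₀ u ∧ B₀s v + D₀ u = y.2) ↔ (v, u) = L y := by
  have hcoer : ∀ v, α * ‖v‖ ^ 2 ≤ (ι ∘L j - A₀) v v := fun v => by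
    have h := hG v
    rw [abs_of_nonpos (hA₀ v)] at h
    simp only [sub_apply, ContinuousLinearMap.comp_apply, hι,
      real_inner_self_eq_norm_sq]
    linarith
  obtain ⟨M, hM⟩ := exists_equiv_dual_of_coercive (ι ∘L j - A₀)
    ⟨α, hα, fun v => by have := hcoer v; rwa [pow_two, ← mul_assoc] at this⟩
  obtain ⟨e, he⟩ := exists_equiv_dual_of_coercive _
    (schur_isCoercive M B₀ B₀s hB₀s D₀ hD₀nn α hα (fun v => by rw [hM]; exact hcoer v)
      β hβ hB₀cr)
  let Mi : (V →L[ℝ] ℝ) →L[ℝ] V := M.symm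
  let Si : U →L[ℝ] U := (e.symm : (U →L[ℝ] ℝ) →L[ℝ] U) ∘L (innerSL ℝ : U →L[ℝ] (U →L[ℝ] ℝ))
  -- `Si` is the inverse of the Schur complement.
  have hS : ∀ u g, B₀s (Mi (B₀ u)) + D₀ u = g ↔ u = Si g := fun u g => by
    have h1 : e u = innerSL ℝ (B₀s (Mi (B₀ u)) + D₀ u) := he u
    have h2 : u = Si g ↔ e u = innerSL ℝ g := e.eq_symm_apply
    rw [h2, h1]
    exact (innerSL_inj (𝕜 := ℝ)).symm
  let Lu : X₁ × U →L[ℝ] U := Si ∘L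
    (ContinuousLinearMap.snd ℝ X₁ U - B₀s ∘L Mi ∘L ι ∘L ContinuousLinearMap.fst ℝ X₁ U)
  let Lv : X₁ × U →L[ℝ] V := Mi ∘L (ι ∘L ContinuousLinearMap.fst ℝ X₁ U + B₀ ∘L Lu)
  refine ⟨Lv.prod Lu, fun y v u => ?_⟩
  have hLu : Lu y = Si (y.2 - B₀s (Mi (ι y.1))) := rfl
  have hLv : Lv y = Mi (ι y.1 + B₀ (Lu y)) := rfl
  have hv : ι (j v - y.1) = A₀ v + B₀ u ↔ v = Mi (ι y.1 + B₀ u) := by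
    have h2 : v = Mi (ι y.1 + B₀ u) ↔ M v = ι y.1 + B₀ u := M.eq_symm_apply
    have h3 : M v = ι (j v) - A₀ v := hM v
    rw [h2, h3, map_sub, sub_eq_iff_eq_add, sub_eq_iff_eq_add,
      show A₀ v + B₀ u + ι y.1 = ι y.1 + B₀ u + A₀ v by abel]
  have hu : B₀s (Mi (ι y.1 + B₀ u)) + D₀ u = y.2 ↔ u = Lu y := by
    rw [hLu, ← hS, map_add, map_add, eq_sub_iff_add_eq,
      show B₀s (Mi (ι y.1)) + B₀s (Mi (B₀ u)) + D₀ u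
        = B₀s (Mi (B₀ u)) + D₀ u + B₀s (Mi (ι y.1)) by abel]
  rw [ContinuousLinearMap.prod_apply, Prod.mk.injEq, hv, hLv]
  constructor
  · rintro ⟨h1, h2⟩
    rw [h1] at h2
    have h3 := hu.1 h2
    exact ⟨by rw [← h3]; exact h1, h3⟩
  · rintro ⟨h1, h2⟩
    rw [← h2] at h1
    exact ⟨h1, by rw [h1]; exact hu.2 h2⟩

/-- Theorem `T:15`, first part: under dissipativity of `A₀` and `-D₀`,
self-adjointness of `D₀`, a Gårding inequality for `A₀` and closed range of `B₀`, the operator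
`E_I - A` is boundedly invertible on `X₁ × U` (bijective from its domain onto `X₁ × U` with
bounded inverse). Here `A (j v, u) = (w, -B₀* v - D₀ u)` with `ι w = A₀ v + B₀ u`, and
`(E_I - A)(j v, u) = (j v - w, B₀* v + D₀ u)`. -/
theorem statement_15
    (j : V →L[ℝ] X₁) (hj_inj : Function.Injective j) (hj_dense : DenseRange j)
    (ι : X₁ →L[ℝ] (V →L[ℝ] ℝ)) (hι : ∀ (x : X₁) (v : V), ι x v = ⟪x, j v⟫)
    (A₀ : V →L[ℝ] (V →L[ℝ] ℝ)) (B₀ : U →L[ℝ] (V →L[ℝ] ℝ))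
    (B₀s : V →L[ℝ] U) (hB₀s : ∀ (v : V) (u : U), ⟪B₀s v, u⟫ = B₀ u v)
    (D₀ : U →L[ℝ] U)
    (hD₀sa : ∀ u u' : U, ⟪D₀ u, u'⟫ = ⟪u, D₀ u'⟫) (hD₀nn : ∀ u : U, 0 ≤ ⟪D₀ u, u⟫)
    (hA₀ : ∀ v : V, A₀ v v ≤ 0)
    (α : ℝ) (hα : 0 < α) (hG : ∀ v : V, α * ‖v‖ ^ 2 ≤ ‖j v‖ ^ 2 + |A₀ v v|)
    (β : ℝ) (hβ : 0 < β) (hB₀cr : ∀ u : U, β * ‖u‖ ≤ ‖B₀ u‖) :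
    -- `E_I - A` is surjective onto `X₁ × U`:
    (∀ y : X₁ × U, ∃ (v : V) (u : U) (w : X₁),
        ι w = A₀ v + B₀ u ∧ j v - w = y.1 ∧ B₀s v + D₀ u = y.2) ∧
    -- `E_I - A` is injective:
    (∀ (v v' : V) (u u' : U) (w w' : X₁),
        ι w = A₀ v + B₀ u → ι w' = A₀ v' + B₀ u' →
        j v - w = j v' - w' → B₀s v + D₀ u = B₀s v' + D₀ u' → v = v' ∧ u = u') ∧
    -- with bounded inverse:
    ∃ C : ℝ, 0 < C ∧ ∀ (v : V) (u : U) (w : X₁), ι w = A₀ v + B₀ u →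
      ‖((j v, u) : X₁ × U)‖ ≤ C * ‖((j v - w, B₀s v + D₀ u) : X₁ × U)‖ := by
  obtain ⟨L, hL⟩ := exists_solution_operator j ι hι A₀ B₀ B₀s hB₀s D₀ hD₀nn hA₀ α hα hG β hβ
    hB₀cr
  have key : ∀ (v : V) (u : U) (w : X₁), ι w = A₀ v + B₀ u →
      (v, u) = L (j v - w, B₀s v + D₀ u) := fun v u w h =>
    (hL (j v - w, B₀s v + D₀ u) v u).1 ⟨by simpa using h, rfl⟩
  refine ⟨fun y => ?_, fun v v' u u' w w' h h' h1 h2 => ?_, ?_⟩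
  · obtain ⟨h1, h2⟩ := (hL y (L y).1 (L y).2).2 rfl
    exact ⟨(L y).1, (L y).2, j (L y).1 - y.1, h1, sub_sub_cancel _ _, h2⟩
  · have h3 := key v u w h
    rw [h1, h2, ← key v' u' w' h'] at h3
    exact Prod.mk.inj h3
  · let G : X₁ × U →L[ℝ] X₁ × U := (j.prodMap (ContinuousLinearMap.id ℝ U)) ∘L L
    refine ⟨‖G‖ + 1, by positivity, fun v u w h => ?_⟩
    have h1 : G (j v - w, B₀s v + D₀ u) = (j v, u) := by
      change (j.prodMap (ContinuousLinearMap.id ℝ U)) (L (j v - w, B₀s v + D₀ u)) = (j v, u)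
      rw [← key v u w h]
      rfl
    rw [← h1]
    refine (G.le_opNorm _).trans ?_
    gcongr
    linarith
end
end

section
/- Let V, X₁, U be real Hilbert spaces, j : V → X₁ an injective bounded linear map with dense range, V* the dual of V, ι : X₁ → V* the embedding (ι x)(v) = ⟨x, j v⟩, and i_V : V → V* the inclusion (i_V v)(w) = ⟨j v, j w⟩_{X₁}. Let A₀ : V → V*, B₀ : U → V* be bounded, B₀* : V → U defined by ⟨B₀* v, u⟩ = (B₀ u)(v), and D₀ : U → U bounded, self-adjoint, with ⟨D₀ u, u⟩ ≥ 0 for all u. Assume A₀ is dissipative ((A₀ v)(v) ≤ 0 for all v) and satisfies the Gårding inequality ‖j v‖²_{X₁} + |(A₀ v)(v)| ≥ α‖v‖²_V for some α > 0 and all v ∈ V (so that i_V − A₀ : V → V* is boundedly invertible). Let A be the operator on X₁ × U with domain D(A) = {(j v, u) : v ∈ V, u ∈ U, A₀ v + B₀ u ∈ ran ι} and action A(j v, u) = (ι⁻¹(A₀ v + B₀ u), −B₀* v − D₀ u), and let E_I(x, u) = (x, 0). Then E_I − A (with domain D(A)) is boundedly invertible on X₁ × U if and only if the Schur complement B₀*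 ∘ (i_V − A₀)⁻¹ ∘ B₀ + D₀ : U → U is boundedly invertible. -/
/-!
Write `T = i_V - A₀` and `S = B₀* T⁻¹ B₀ + D₀`. Since `ι ∘ j = i_V` and `ι` is linear, the resolvent
equation `(E_I - A)(j v, u) = (x, z)` is equivalent to `v = T⁻¹ (ι x + B₀ u)` together with
`S u = z - B₀* T⁻¹ ι x` (block elimination of `v`). Thus `S⁻¹` yields an explicit bounded inverse
of `E_I - A`; conversely, solving with right-hand sides `(0, z)` shows that `S` is bijective, and
the open mapping theorem makes its inverse bounded.
-/

noncomputable section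

open scoped RealInnerProductSpace

variable {V X₁ U : Type*}
  [NormedAddCommGroup V] [InnerProductSpace ℝ V] [CompleteSpace V]
  [NormedAddCommGroup X₁] [InnerProductSpace ℝ X₁] [CompleteSpace X₁]
  [NormedAddCommGroup U] [InnerProductSpace ℝ U] [CompleteSpace U]
/-- Theorem `T:15`, second part: under dissipativity of `A₀` and `-D₀`,
self-adjointness of `D₀` and a Gårding inequality for `A₀` (which makes `i_V - A₀ : V → V*`
boundedly invertible, with inverse `Tinv`), the operator `E_I - A` is boundedly invertible on
`X₁ × U` if and only if the Schur complement `B₀* (i_V - A₀)⁻¹ B₀ + D₀` is boundedly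
invertible on `U`. -/
theorem statement_16
    (j : V →L[ℝ] X₁) (hj_inj : Function.Injective j) (hj_dense : DenseRange j)
    (ι : X₁ →L[ℝ] (V →L[ℝ] ℝ)) (hι : ∀ (x : X₁) (v : V), ι x v = ⟪x, j v⟫)
    (iV : V →L[ℝ] (V →L[ℝ] ℝ)) (hiV : ∀ v w : V, iV v w = ⟪j v, j w⟫)
    (A₀ : V →L[ℝ] (V →L[ℝ] ℝ)) (B₀ : U →L[ℝ] (V →L[ℝ] ℝ))
    (B₀s : V →L[ℝ] U) (hB₀s : ∀ (v : V) (u : U), ⟪B₀s v, u⟫ = B₀ u v)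
    (D₀ : U →L[ℝ] U)
    (hD₀sa : ∀ u u' : U, ⟪D₀ u, u'⟫ = ⟪u, D₀ u'⟫) (hD₀nn : ∀ u : U, 0 ≤ ⟪D₀ u, u⟫)
    (hA₀ : ∀ v : V, A₀ v v ≤ 0)
    (α : ℝ) (hα : 0 < α) (hG : ∀ v : V, α * ‖v‖ ^ 2 ≤ ‖j v‖ ^ 2 + |A₀ v v|)
    -- `i_V - A₀` is boundedly invertible, with inverse `Tinv`:
    (Tinv : (V →L[ℝ] ℝ) →L[ℝ] V)
    (hTinv₁ : ∀ v : V, Tinv ((iV - A₀) v) = v)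
    (hTinv₂ : ∀ f : V →L[ℝ] ℝ, (iV - A₀) (Tinv f) = f) :
    -- `E_I - A` boundedly invertible ↔ the Schur complement is boundedly invertible:
    (((∀ y : X₁ × U, ∃ (v : V) (u : U) (w : X₁),
          ι w = A₀ v + B₀ u ∧ j v - w = y.1 ∧ B₀s v + D₀ u = y.2) ∧
      (∀ (v v' : V) (u u' : U) (w w' : X₁),
          ι w = A₀ v + B₀ u → ι w' = A₀ v' + B₀ u' →
          j v - w = j v' - w' → B₀s v + D₀ u = B₀s v' + D₀ u' → v = v' ∧ u = u') ∧
      ∃ C : ℝ, 0 < C ∧ ∀ (v : V) (u : U) (w : X₁), ι w = A₀ v + B₀ u →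
        ‖((j v, u) : X₁ × U)‖ ≤ C * ‖((j v - w, B₀s v + D₀ u) : X₁ × U)‖) ↔
    (∃ Sinv : U →L[ℝ] U,
      (∀ u : U, Sinv ((B₀s.comp (Tinv.comp B₀) + D₀) u) = u) ∧
      ∀ u : U, (B₀s.comp (Tinv.comp B₀) + D₀) (Sinv u) = u)) := by
  have hιj : ∀ v : V, ι (j v) = iV v := fun v => by
    ext w
    rw [hι, hiV]
  -- Elimination of `v` from the first row.
  have helim : ∀ (v : V) (u : U) (w : X₁), ι w = A₀ v + B₀ u →
      v = Tinv (ι (j v - w)) + Tinv (B₀ u) := by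
    intro v u w h
    have h1 : ι (j v - w) + B₀ u = (iV - A₀) v := by
      rw [map_sub, hιj, h, sub_apply]
      abel
    rw [← map_add, h1, hTinv₁]
  -- Conversely, the `v` given by that formula lies in the domain.
  have hdom : ∀ (x : X₁) (u : U),
      ι (j (Tinv (ι x + B₀ u)) - x) = A₀ (Tinv (ι x + B₀ u)) + B₀ u := by
    intro x u
    have h1 := hTinv₂ (ι x + B₀ u)
    rw [sub_apply, sub_eq_iff_eq_add] at h1
    rw [map_sub, hιj, h1]
    abel
  have hschur : ∀ (v : V) (u : U) (w : X₁), ι w = A₀ v + B₀ u →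
      (B₀s.comp (Tinv.comp B₀) + D₀) u = (B₀s v + D₀ u) - B₀s (Tinv (ι (j v - w))) := by
    intro v u w h
    have h1 := congrArg B₀s (helim v u w h)
    rw [map_add] at h1
    rw [h1]
    simp only [add_apply, ContinuousLinearMap.comp_apply]
    abel
  constructor
  · rintro ⟨hsurj, hinj, -⟩
    -- With `v = T⁻¹ B₀ u`, the pair `(j v, u)` lies in `D(A)` and is mapped to `(0, S u)`.
    have hdom0 : ∀ u : U, ι (j (Tinv (B₀ u))) = A₀ (Tinv (B₀ u)) + B₀ u := fun u => by
      simpa using hdom 0 u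
    have hbij : Function.Bijective (B₀s.comp (Tinv.comp B₀) + D₀) := by
      constructor
      · intro u u' h
        exact (hinj _ _ u u' _ _ (hdom0 u) (hdom0 u') (by simp) h).2
      · intro z
        obtain ⟨v, u, w, h, hx, hz⟩ := hsurj (0, z)
        refine ⟨u, ?_⟩
        rw [hschur v u w h, hx, hz]
        simp
    let e := ContinuousLinearEquiv.ofBijective (B₀s.comp (Tinv.comp B₀) + D₀)
      (LinearMap.ker_eq_bot.2 hbij.1) (LinearMap.range_eq_top.2 hbij.2)
    exact ⟨e.symm, fun u => e.symm_apply_apply u, fun u => e.apply_symm_apply u⟩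
  · rintro ⟨Sinv, hS₁, hS₂⟩
    -- The solution operator, as a bounded map `X₁ × U → U`, respectively `X₁ × U → V`.
    let Ru : X₁ × U →L[ℝ] U := Sinv.comp
      (ContinuousLinearMap.snd ℝ X₁ U - (B₀s.comp (Tinv.comp ι)).comp (.fst ℝ X₁ U))
    let Rv : X₁ × U →L[ℝ] V := Tinv.comp (ι.comp (.fst ℝ X₁ U) + B₀.comp Ru)
    have hRu : ∀ (v : V) (u : U) (w : X₁), ι w = A₀ v + B₀ u →
        u = Ru (j v - w, B₀s v + D₀ u) := by
      intro v u w h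
      conv_lhs => rw [← hS₁ u, hschur v u w h]
      rfl
    have hRv : ∀ (v : V) (u : U) (w : X₁), ι w = A₀ v + B₀ u →
        v = Rv (j v - w, B₀s v + D₀ u) := by
      intro v u w h
      change v = Tinv (ι (j v - w) + B₀ (Ru (j v - w, B₀s v + D₀ u)))
      rw [← hRu v u w h, map_add]
      exact helim v u w h
    refine ⟨?_, ?_, ?_⟩
    · rintro ⟨x, z⟩
      refine ⟨Rv (x, z), Ru (x, z), j (Rv (x, z)) - x, hdom x _, by simp, ?_⟩
      have h1 : (B₀s.comp (Tinv.comp B₀) + D₀) (Ru (x, z)) = z - B₀s (Tinv (ι x)) := hS₂ _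
      rw [hschur (Rv (x, z)) (Ru (x, z)) (j (Rv (x, z)) - x) (hdom x (Ru (x, z))),
        sub_sub_cancel] at h1
      exact sub_left_injective h1
    · intro v v' u u' w w' h h' hx hz
      exact ⟨by rw [hRv v u w h, hRv v' u' w' h', hx, hz],
        by rw [hRu v u w h, hRu v' u' w' h', hx, hz]⟩
    · let R : X₁ × U →L[ℝ] X₁ × U := (j.comp Rv).prod Ru
      -- The extra `1` keeps the constant positive when `R = 0`.
      refine ⟨‖R‖ + 1, by positivity, fun v u w h => ?_⟩
      have h1 : ((j v, u) : X₁ × U) = R (j v - w, B₀s v + D₀ u) :=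
        Prod.ext (congrArg j (hRv v u w h)) (hRu v u w h)
      rw [h1]
      exact (R.le_opNorm _).trans (by gcongr; linarith)
end
end

section
/- Let X₁, X₂ be complex Hilbert spaces, X = X₁ × X₂, A a dissipative linear operator on X with domain D(A) and components A = (A₁, A₂), E(x₁,x₂) = (E₁x₁, 0), Q(x₁,x₂) = (Q₁x₁, Q₂x₂) with E₁, Q₁, Q₂ bounded and boundedly invertible and E₁*Q₁ coercive. Assume there exists s₀ ∈ ℂ with Re s₀ > 0 such that s₀·E − A∘Q is boundedly invertible, and assume: whenever (0, x₂) ∈ D(A) and A₂(0, x₂) = 0, then x₂ = 0. Then: (1) for every x₁ ∈ X₁ there is at most one x₂ ∈ X₂ with (Q₁x₁, Q₂x₂) ∈ D(A) and A₂(Q₁x₁, Q₂x₂) = 0, so the operator A_red with domain D(A_red) = {x₁ ∈ X₁ : ∃ x₂ ∈ X₂, (Q₁x₁, Q₂x₂) ∈ D(A) and A₂(Q₁x₁, Q₂x₂) = 0} and action A_red x₁ = E₁⁻¹ A₁(Q₁x₁, Q₂x₂) is well-defined; (2) A_red is dissipative with respect to the inner product ⟨x, y⟩_{EQ} = ⟨x,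 E₁*Q₁ y⟩ on X₁, i.e., Re⟨A_red x₁, E₁*Q₁ x₁⟩ ≤ 0 for all x₁ ∈ D(A_red); (3) s₀·I − A_red : D(A_red) → X₁ is surjective. In particular, A_red is maximally dissipative on X₁ equipped with ⟨·,·⟩_{EQ}. -/
/-!
Uniqueness of `x₂` follows by linearity: two solutions for the same `x₁` differ by an element
`(0, Q₂ x₂ - Q₂ x₂')` of the domain on which `A₂` vanishes. Dissipativity is inherited from `A`,
because `⟨E₁⁻¹ a, E₁* Q₁ x₁⟩ = ⟨a, Q₁ x₁⟩` and the second component of `A (Q₁ x₁, Q₂ x₂)` is zero.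
For surjectivity, solve `(s₀ E - A Q) x = (E₁ y₁, 0)`: the second row is the constraint
`A₂ = 0`, and `E₁⁻¹` of the first row is the resolvent equation of the reduced operator.
-/

noncomputable section

open Complex ContinuousLinearMap
open scoped ComplexInnerProductSpace

variable {X₁ X₂ : Type*}
  [NormedAddCommGroup X₁] [InnerProductSpace ℂ X₁] [CompleteSpace X₁]
  [NormedAddCommGroup X₂] [InnerProductSpace ℂ X₂] [CompleteSpace X₂]

/-- `Re ⟨x, y⟩` on the Hilbert-space product `X₁ × X₂` (componentwise sum). -/
def reInner2 (x y : X₁ × X₂) : ℝ := (⟪x.1, y.1⟫).re + (⟪x.2, y.2⟫).re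

/-- A (possibly unbounded) operator on the Hilbert space `X₁ × X₂` is dissipative if
`Re ⟨A x, x⟩ ≤ 0` for all `x` in its domain. -/
def DissipativeProd (A : (X₁ × X₂) →ₗ.[ℂ] (X₁ × X₂)) : Prop :=
  ∀ x : A.domain, reInner2 (A x) (x : X₁ × X₂) ≤ 0

/-- Maximally dissipative: dissipative and `λ I - A` surjective for some `λ > 0`. -/
def MaxDissipativeProd (A : (X₁ × X₂) →ₗ.[ℂ] (X₁ × X₂)) : Prop :=
  DissipativeProd A ∧
    ∃ l : ℝ, 0 < l ∧ ∀ y : X₁ × X₂, ∃ x : A.domain, (l : ℂ) • (x : X₁ × X₂) - A x = y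

/-- A bounded operator is coercive if it is self-adjoint and strictly positive. -/
def Coercive {X : Type*} [NormedAddCommGroup X] [InnerProductSpace ℂ X] [CompleteSpace X]
    (T : X →L[ℂ] X) : Prop :=
  IsSelfAdjoint T ∧ ∃ c : ℝ, 0 < c ∧ ∀ x : X, c * ‖x‖ ^ 2 ≤ (⟪T x, x⟫).re

/-- The block operator `E = diag(E₁, 0)`. -/
def blockE (E₁ : X₁ →L[ℂ] X₁) : X₁ × X₂ → X₁ × X₂ := fun x => (E₁ x.1, 0)

/-- The block operator `Q = diag(Q₁, Q₂)`. -/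
def blockQ (Q₁ : X₁ →L[ℂ] X₁) (Q₂ : X₂ →L[ℂ] X₂) : X₁ × X₂ → X₁ × X₂ :=
  fun x => (Q₁ x.1, Q₂ x.2)

/-- The pencil `s E - A Q` on its natural domain `{x : Q x ∈ D(A)}`. -/
def pencilApply {X : Type*} [NormedAddCommGroup X] [NormedSpace ℂ X]
    (s : ℂ) (E Q : X → X) (A : X →ₗ.[ℂ] X) (x : {x : X // Q x ∈ A.domain}) : X :=
  s • E x.1 - A ⟨Q x.1, x.2⟩

/-- `s E - A Q` is boundedly invertible: it is a bijection from its domain onto `X`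
with bounded inverse. -/
def PencilBddInv {X : Type*} [NormedAddCommGroup X] [NormedSpace ℂ X]
    (s : ℂ) (E Q : X → X) (A : X →ₗ.[ℂ] X) : Prop :=
  Function.Bijective (pencilApply s E Q A) ∧
    ∃ C : ℝ, 0 < C ∧ ∀ x : {x : X // Q x ∈ A.domain}, ‖x.1‖ ≤ C * ‖pencilApply s E Q A x‖

/-- Theorem `T:2HZ`: the reduced operator `A_red` is well defined, dissipative
for the inner product `⟨x, y⟩_{EQ} = ⟨x, E₁* Q₁ y⟩`, and `s₀ I - A_red` is surjective; in
particular `A_red` is maximally dissipative on `(X₁, ⟨·,·⟩_{EQ})`. -/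
theorem statement_17
    (A : (X₁ × X₂) →ₗ.[ℂ] (X₁ × X₂)) (hA : DissipativeProd A)
    (E₁ Q₁ : X₁ ≃L[ℂ] X₁) (Q₂ : X₂ ≃L[ℂ] X₂)
    (hcoer : Coercive ((ContinuousLinearMap.adjoint (E₁ : X₁ →L[ℂ] X₁)).comp
      (Q₁ : X₁ →L[ℂ] X₁)))
    (s₀ : ℂ) (hs₀ : 0 < s₀.re)
    (hreg : PencilBddInv s₀ (blockE (E₁ : X₁ →L[ℂ] X₁))
      (blockQ (Q₁ : X₁ →L[ℂ] X₁) (Q₂ : X₂ →L[ℂ] X₂)) A)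
    -- `(0, x₂) ∈ D(A)` and `A₂ (0, x₂) = 0` imply `x₂ = 0`:
    (hinj : ∀ (x₂ : X₂) (h : (((0 : X₁), x₂) : X₁ × X₂) ∈ A.domain),
      (A ⟨((0 : X₁), x₂), h⟩).2 = 0 → x₂ = 0) :
    -- (1) the constraint `x₂` is unique, so `A_red` is well defined:
    (∀ (x₁ : X₁) (x₂ x₂' : X₂)
        (h : ((Q₁ x₁, Q₂ x₂) : X₁ × X₂) ∈ A.domain)
        (h' : ((Q₁ x₁, Q₂ x₂') : X₁ × X₂) ∈ A.domain),
      (A ⟨(Q₁ x₁, Q₂ x₂), h⟩).2 = 0 → (A ⟨(Q₁ x₁, Q₂ x₂'), h'⟩).2 = 0 → x₂ = x₂') ∧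
    -- (2) `A_red x₁ = E₁⁻¹ A₁ (Q₁ x₁, Q₂ x₂)` is dissipative for `⟨·,·⟩_{EQ}`:
    (∀ (x₁ : X₁) (x₂ : X₂) (h : ((Q₁ x₁, Q₂ x₂) : X₁ × X₂) ∈ A.domain),
      (A ⟨(Q₁ x₁, Q₂ x₂), h⟩).2 = 0 →
      (⟪E₁.symm ((A ⟨(Q₁ x₁, Q₂ x₂), h⟩).1),
        ((ContinuousLinearMap.adjoint (E₁ : X₁ →L[ℂ] X₁)).comp (Q₁ : X₁ →L[ℂ] X₁)) x₁⟫).re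
        ≤ 0) ∧
    -- (3) `s₀ I - A_red` is surjective onto `X₁`:
    (∀ y₁ : X₁, ∃ (x₁ : X₁) (x₂ : X₂) (h : ((Q₁ x₁, Q₂ x₂) : X₁ × X₂) ∈ A.domain),
      (A ⟨(Q₁ x₁, Q₂ x₂), h⟩).2 = 0 ∧
        s₀ • x₁ - E₁.symm ((A ⟨(Q₁ x₁, Q₂ x₂), h⟩).1) = y₁) := by
  refine ⟨?_, ?_, ?_⟩
  · intro x₁ x₂ x₂' h h' hz hz'
    have hsub : (⟨(Q₁ x₁, Q₂ x₂), h⟩ - ⟨(Q₁ x₁, Q₂ x₂'), h'⟩ : A.domain).1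
        = ((0 : X₁), Q₂ x₂ - Q₂ x₂') := by simp
    have hmem : ((0 : X₁), Q₂ x₂ - Q₂ x₂') ∈ A.domain := by
      rw [← hsub]; exact Subtype.property _
    have hval : A ⟨_, hmem⟩ = A ⟨(Q₁ x₁, Q₂ x₂), h⟩ - A ⟨(Q₁ x₁, Q₂ x₂'), h'⟩ := by
      rw [← LinearPMap.map_sub]
      exact congrArg A (Subtype.ext hsub.symm)
    have h0 := hinj _ hmem (by rw [hval, Prod.snd_sub, hz, hz', sub_zero])
    exact Q₂.injective (sub_eq_zero.mp h0)
  · intro x₁ x₂ h hz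
    have hd := hA ⟨(Q₁ x₁, Q₂ x₂), h⟩
    simp only [reInner2, hz, inner_zero_left, Complex.zero_re, add_zero] at hd
    rw [ContinuousLinearMap.comp_apply, ContinuousLinearMap.adjoint_inner_right]
    simpa using hd
  · intro y₁
    obtain ⟨⟨⟨x₁, x₂⟩, hx⟩, hp⟩ := hreg.1.2 (E₁ y₁, 0)
    have h : ((Q₁ x₁, Q₂ x₂) : X₁ × X₂) ∈ A.domain := hx
    have hp' : s₀ • ((E₁ x₁, 0) : X₁ × X₂) - A ⟨(Q₁ x₁, Q₂ x₂), h⟩ = (E₁ y₁, 0) := hp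
    have h1 : s₀ • E₁ x₁ - (A ⟨(Q₁ x₁, Q₂ x₂), h⟩).1 = E₁ y₁ := congrArg Prod.fst hp'
    have h2 : s₀ • (0 : X₂) - (A ⟨(Q₁ x₁, Q₂ x₂), h⟩).2 = 0 := congrArg Prod.snd hp'
    refine ⟨x₁, x₂, h, by simpa using h2, E₁.injective ?_⟩
    rw [map_sub, map_smul, E₁.apply_symm_apply, h1]
end
end

section
/- Let X₁, X₂ be complex Hilbert spaces, X = X₁ × X₂, A a dissipative linear operator on X with domain D(A) and components A = (A₁, A₂), E(x₁,x₂) = (E₁x₁, 0), Q(x₁,x₂) = (Q₁x₁, Q₂x₂) with E₁, Q₁, Q₂ bounded and boundedly invertible and E₁*Q₁ coercive. Assume: whenever (0, x₂) ∈ D(A) and A₂(0, x₂) = 0, then x₂ = 0, and let A_red be the operator on X₁ with domain D(A_red) = {x₁ : ∃ x₂, (Q₁x₁, Q₂x₂) ∈ D(A) and A₂(Q₁x₁, Q₂x₂) = 0} and action A_red x₁ = E₁⁻¹ A₁(Q₁x₁, Q₂x₂). Then the following are equivalent: (a) the pair (E, AQ) is regular, i.e., s·E − A∘Q is boundedly invertible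 for some s with Re s > 0; (b) A is closed (its graph is closed in X × X), A₂ : D(A) → X₂ is surjective, and there exists s with Re s > 0 such that s·I − A_red is boundedly invertible; (c) A is closed, A₂ : D(A) → X₂ is surjective, and there exists s with Re s > 0 such that s·I − A_red is surjective onto X₁; (d) A is closed, A₂ : D(A) → X₂ is surjective, and A_red is maximally dissipative on X₁ equipped with the inner product ⟨x, y⟩_{EQ} = ⟨x, E₁*Q₁ y⟩. -/
/-! The reduced operator is treated through its graph `redGraph`, a linear relation on `X₁`, and the
pencil through the equivalence `(s E - A Q) x = y ↔ (Q x, s E x - y) ∈ graph A`.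

* Since `⟨E₁⁻¹ a, E₁* Q₁ x⟩ = ⟨a, Q₁ x⟩`, dissipativity of `A` makes `A_red` dissipative for the
  `EQ` inner product. Coercivity then gives `‖x‖ ≤ (K / Re s) ‖s x - A_red x‖` on the right
  half-plane with `K` independent of `s`, so surjectivity of `s - A_red` already implies
  bounded invertibility, which is (c) ⇒ (b).
* Surjectivity of `s - A_red` persists under perturbations of `s` smaller than `Re s / K`, by the
  contraction principle. Moving in small steps along the vertical line through `s` reaches the real
  point `Re s`, so (c) ⇒ (d).
* If the pencil is boundedly invertible, closedness of `A` and both surjectivity claims follow by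
  solving `(s E - A Q) x = y` for suitable `y`. Conversely, the surjectivity claims and injectivity
  show that the pencil is bijective, and its inverse is bounded by the closed graph theorem.
-/


noncomputable section

open Complex ContinuousLinearMap
open scoped ComplexInnerProductSpace

variable {X₁ X₂ : Type*}
  [NormedAddCommGroup X₁] [InnerProductSpace ℂ X₁] [CompleteSpace X₁]
  [NormedAddCommGroup X₂] [InnerProductSpace ℂ X₂] [CompleteSpace X₂]

/-- `s I - A_red` is surjective onto `X₁`, where
`A_red x₁ = E₁⁻¹ A₁ (Q₁ x₁, Q₂ x₂)` with constraint `A₂ (Q₁ x₁, Q₂ x₂) = 0`. -/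
def redSurj (s : ℂ) (E₁ Q₁ : X₁ ≃L[ℂ] X₁) (Q₂ : X₂ ≃L[ℂ] X₂)
    (A : (X₁ × X₂) →ₗ.[ℂ] (X₁ × X₂)) : Prop :=
  ∀ y₁ : X₁, ∃ (x₁ : X₁) (x₂ : X₂) (h : ((Q₁ x₁, Q₂ x₂) : X₁ × X₂) ∈ A.domain),
    (A ⟨(Q₁ x₁, Q₂ x₂), h⟩).2 = 0 ∧
      s • x₁ - E₁.symm ((A ⟨(Q₁ x₁, Q₂ x₂), h⟩).1) = y₁

/-- `s I - A_red` is injective. -/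
def redInj (s : ℂ) (E₁ Q₁ : X₁ ≃L[ℂ] X₁) (Q₂ : X₂ ≃L[ℂ] X₂)
    (A : (X₁ × X₂) →ₗ.[ℂ] (X₁ × X₂)) : Prop :=
  ∀ (x₁ x₁' : X₁) (x₂ x₂' : X₂)
      (h : ((Q₁ x₁, Q₂ x₂) : X₁ × X₂) ∈ A.domain)
      (h' : ((Q₁ x₁', Q₂ x₂') : X₁ × X₂) ∈ A.domain),
    (A ⟨(Q₁ x₁, Q₂ x₂), h⟩).2 = 0 → (A ⟨(Q₁ x₁', Q₂ x₂'), h'⟩).2 = 0 →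
    s • x₁ - E₁.symm ((A ⟨(Q₁ x₁, Q₂ x₂), h⟩).1) =
      s • x₁' - E₁.symm ((A ⟨(Q₁ x₁', Q₂ x₂'), h'⟩).1) → x₁ = x₁'

/-- `(s I - A_red)⁻¹` is bounded. -/
def redBound (s : ℂ) (E₁ Q₁ : X₁ ≃L[ℂ] X₁) (Q₂ : X₂ ≃L[ℂ] X₂)
    (A : (X₁ × X₂) →ₗ.[ℂ] (X₁ × X₂)) : Prop :=
  ∃ C : ℝ, 0 < C ∧
    ∀ (x₁ : X₁) (x₂ : X₂) (h : ((Q₁ x₁, Q₂ x₂) : X₁ × X₂) ∈ A.domain),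
      (A ⟨(Q₁ x₁, Q₂ x₂), h⟩).2 = 0 →
      ‖x₁‖ ≤ C * ‖s • x₁ - E₁.symm ((A ⟨(Q₁ x₁, Q₂ x₂), h⟩).1)‖

/-- `A_red` is dissipative for the inner product `⟨x, y⟩_{EQ} = ⟨x, E₁* Q₁ y⟩` on `X₁`. -/
def redDissip (E₁ Q₁ : X₁ ≃L[ℂ] X₁) (Q₂ : X₂ ≃L[ℂ] X₂)
    (A : (X₁ × X₂) →ₗ.[ℂ] (X₁ × X₂)) : Prop :=
  ∀ (x₁ : X₁) (x₂ : X₂) (h : ((Q₁ x₁, Q₂ x₂) : X₁ × X₂) ∈ A.domain),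
    (A ⟨(Q₁ x₁, Q₂ x₂), h⟩).2 = 0 →
    (⟪E₁.symm ((A ⟨(Q₁ x₁, Q₂ x₂), h⟩).1),
      ((ContinuousLinearMap.adjoint (E₁ : X₁ →L[ℂ] X₁)).comp (Q₁ : X₁ →L[ℂ] X₁)) x₁⟫).re ≤ 0

/-! ### Linear relations -/

lemma Submodule.mem_of_eq_mem {V : Type*} [AddCommGroup V] [Module ℂ V] {G : Submodule ℂ V}
    {p q : V} (e : p = q) (h : q ∈ G) : p ∈ G := e ▸ h

/-- If `s - G` is bounded below by `1 / C` and onto, then `t - G` is onto whenever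
`C * ‖s - t‖ < 1`: a solution `x` of `t x - G x = y` is a fixed point of the contraction
`x ↦ (s - G)⁻¹ (y + (s - t) x)`. -/
lemma relation_surj_perturb {X : Type*} [NormedAddCommGroup X] [NormedSpace ℂ X] [CompleteSpace X]
    (G : Submodule ℂ (X × X)) {s t : ℂ} {C : ℝ} (hC : 0 ≤ C)
    (hb : ∀ p ∈ G, ‖p.1‖ ≤ C * ‖s • p.1 - p.2‖)
    (hs : ∀ y, ∃ p ∈ G, s • p.1 - p.2 = y) (hst : C * ‖s - t‖ < 1) :
    ∀ y, ∃ p ∈ G, t • p.1 - p.2 = y := by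
  intro y
  choose r hrG hr using hs
  have hlip : ∀ u v, ‖(r u).1 - (r v).1‖ ≤ C * ‖u - v‖ := by
    intro u v
    have h := hb _ (G.sub_mem (hrG u) (hrG v))
    have e : s • (r u - r v).1 - (r u - r v).2 = u - v := by
      rw [Prod.fst_sub, Prod.snd_sub, smul_sub, sub_sub_sub_comm, hr, hr]
    rw [e] at h
    exact h
  have hcontr : ContractingWith (Real.toNNReal (C * ‖s - t‖))
      (fun x => (r (y + (s - t) • x)).1) := by
    refine ⟨by simpa using hst, LipschitzWith.of_dist_le_mul fun u v => ?_⟩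
    rw [dist_eq_norm, dist_eq_norm]
    refine (hlip _ _).trans (le_of_eq ?_)
    rw [add_sub_add_left_eq_sub, ← smul_sub, norm_smul, Real.coe_toNNReal _ (by positivity)]
    ring
  have : Nonempty X := ⟨0⟩
  obtain ⟨x, hx⟩ : ∃ x, (r (y + (s - t) • x)).1 = x := ⟨_, hcontr.fixedPoint_isFixedPt⟩
  refine ⟨r (y + (s - t) • x), hrG _, ?_⟩
  have h := hr (y + (s - t) • x)
  rw [hx] at h ⊢
  -- `h` is the required identity with `(s - t) x` added on both sides.
  generalize (r (y + (s - t) • x)).2 = g at h ⊢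
  rw [← add_left_inj ((s - t) • x), ← h, sub_smul]
  abel

/-- If `z - G` is bounded below on the whole line `Re z = a` with a uniform constant, surjectivity
at one point of the line propagates to its real point. -/
lemma relation_surj_real {X : Type*} [NormedAddCommGroup X] [NormedSpace ℂ X] [CompleteSpace X]
    (G : Submodule ℂ (X × X)) {s : ℂ} {C : ℝ} (hC : 0 < C)
    (hb : ∀ z : ℂ, z.re = s.re → ∀ p ∈ G, ‖p.1‖ ≤ C * ‖z • p.1 - p.2‖)
    (hs : ∀ y, ∃ p ∈ G, s • p.1 - p.2 = y) :
    ∀ y, ∃ p ∈ G, (s.re : ℂ) • p.1 - p.2 = y := by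
  -- The segment from `s` to `Re s` is cut into `n` steps of length `|Im s| / n < 1 / C`.
  obtain ⟨n, hn⟩ := exists_nat_gt (C * |s.im|)
  have hN : (0 : ℝ) < n := lt_of_le_of_lt (by positivity) hn
  have key : ∀ k : ℕ, ∀ y, ∃ p ∈ G,
      (s - (((k : ℝ) * (s.im / n) : ℝ) : ℂ) * I) • p.1 - p.2 = y := by
    intro k
    induction k with
    | zero => simpa using hs
    | succ k ih =>
      refine relation_surj_perturb G hC.le (hb _ (by simp)) ih ?_
      have e : (s - (((k : ℝ) * (s.im / n) : ℝ) : ℂ) * I)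
          - (s - ((((k + 1 : ℕ) : ℝ) * (s.im / n) : ℝ) : ℂ) * I)
          = ((s.im / n : ℝ) : ℂ) * I := by
        push_cast; ring
      rw [e, norm_mul, norm_I, mul_one, Complex.norm_real, Real.norm_eq_abs, abs_div,
        abs_of_pos hN, ← mul_div_assoc, div_lt_one hN]
      exact hn
  have h := key n
  have e : s - (((n : ℝ) * (s.im / n) : ℝ) : ℂ) * I = (s.re : ℂ) := by
    rw [mul_div_cancel₀ _ hN.ne']
    apply Complex.ext <;> simp
  rwa [e] at h

/-! ### The reduced operator -/

/-- The graph of `A_red`: pairs `(x₁, z)` such that `A (Q₁ x₁, Q₂ x₂) = (E₁ z, 0)` for some `x₂`. -/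
def redGraph (E₁ Q₁ : X₁ ≃L[ℂ] X₁) (Q₂ : X₂ ≃L[ℂ] X₂)
    (A : (X₁ × X₂) →ₗ.[ℂ] (X₁ × X₂)) : Submodule ℂ (X₁ × X₁) where
  carrier := {p | ∃ x₂ : X₂, (((Q₁ p.1, Q₂ x₂), (E₁ p.2, 0)) : (X₁ × X₂) × (X₁ × X₂)) ∈ A.graph}
  zero_mem' := ⟨0, Submodule.mem_of_eq_mem (by simp) A.graph.zero_mem⟩
  add_mem' := by
    rintro p q ⟨x, hx⟩ ⟨y, hy⟩
    refine ⟨x + y, ?_⟩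
    exact Submodule.mem_of_eq_mem (by simp) (A.graph.add_mem hx hy)
  smul_mem' := by
    rintro c p ⟨x, hx⟩
    refine ⟨c • x, ?_⟩
    exact Submodule.mem_of_eq_mem (by simp) (A.graph.smul_mem c hx)

lemma mem_redGraph_of_domain {E₁ Q₁ : X₁ ≃L[ℂ] X₁} {Q₂ : X₂ ≃L[ℂ] X₂}
    {A : (X₁ × X₂) →ₗ.[ℂ] (X₁ × X₂)} {x₁ : X₁} {x₂ : X₂}
    (h : ((Q₁ x₁, Q₂ x₂) : X₁ × X₂) ∈ A.domain) (h0 : (A ⟨(Q₁ x₁, Q₂ x₂), h⟩).2 = 0) :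
    (x₁, E₁.symm (A ⟨(Q₁ x₁, Q₂ x₂), h⟩).1) ∈ redGraph E₁ Q₁ Q₂ A := by
  refine ⟨x₂, ?_⟩
  have hm := A.mem_graph ⟨(Q₁ x₁, Q₂ x₂), h⟩
  convert hm using 2
  exact Prod.ext (by simp) h0.symm

lemma redSurj_iff (s : ℂ) (E₁ Q₁ : X₁ ≃L[ℂ] X₁) (Q₂ : X₂ ≃L[ℂ] X₂)
    (A : (X₁ × X₂) →ₗ.[ℂ] (X₁ × X₂)) :
    redSurj s E₁ Q₁ Q₂ A ↔ ∀ y, ∃ p ∈ redGraph E₁ Q₁ Q₂ A, s • p.1 - p.2 = y := by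
  constructor
  · intro h y
    obtain ⟨x₁, x₂, hd, h0, hy⟩ := h y
    exact ⟨_, mem_redGraph_of_domain hd h0, hy⟩
  · intro h y
    obtain ⟨⟨x₁, z⟩, ⟨x₂, hm⟩, hy⟩ := h y
    obtain ⟨⟨u, hu⟩, rfl, hAu⟩ := A.mem_graph_iff.1 hm
    exact ⟨x₁, x₂, hu, by rw [hAu], by rw [hAu]; simpa using hy⟩

lemma redDissip_of_dissipative {A : (X₁ × X₂) →ₗ.[ℂ] (X₁ × X₂)} (hA : DissipativeProd A)
    (E₁ Q₁ : X₁ ≃L[ℂ] X₁) (Q₂ : X₂ ≃L[ℂ] X₂) : redDissip E₁ Q₁ Q₂ A := by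
  intro x₁ x₂ h h0
  have hd := hA ⟨(Q₁ x₁, Q₂ x₂), h⟩
  unfold reInner2 at hd
  rw [h0] at hd
  rw [ContinuousLinearMap.comp_apply, ContinuousLinearMap.adjoint_inner_right]
  simpa using hd

/-- The resolvent estimate for `A_red`, with one constant for the whole right half-plane. -/
lemma redGraph_bound {A : (X₁ × X₂) →ₗ.[ℂ] (X₁ × X₂)} (hA : DissipativeProd A)
    (E₁ Q₁ : X₁ ≃L[ℂ] X₁) (Q₂ : X₂ ≃L[ℂ] X₂)
    (hcoer : Coercive ((ContinuousLinearMap.adjoint (E₁ : X₁ →L[ℂ] X₁)).comp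
      (Q₁ : X₁ →L[ℂ] X₁))) :
    ∃ K : ℝ, 0 < K ∧ ∀ s : ℂ, 0 < s.re → ∀ p ∈ redGraph E₁ Q₁ Q₂ A,
      ‖p.1‖ ≤ K / s.re * ‖s • p.1 - p.2‖ := by
  have hdiss := redDissip_of_dissipative hA E₁ Q₁ Q₂
  unfold redDissip at hdiss
  set T := (ContinuousLinearMap.adjoint (E₁ : X₁ →L[ℂ] X₁)).comp (Q₁ : X₁ →L[ℂ] X₁)
  obtain ⟨hsa, c, hc, hcT⟩ := hcoer
  refine ⟨(‖T‖ + 1) / c, by positivity, ?_⟩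
  rintro s hs ⟨x, z⟩ ⟨x₂, hm⟩
  obtain ⟨⟨u, hu⟩, rfl, hAu⟩ := A.mem_graph_iff.1 hm
  have hd := hdiss x x₂ hu (by rw [hAu])
  rw [hAu] at hd
  simp only [ContinuousLinearEquiv.symm_apply_apply] at hd
  have him : (⟪x, T x⟫).im = 0 := by
    have h1 : ⟪x, T x⟫ = ⟪T x, x⟫ :=
      (ContinuousLinearMap.isSelfAdjoint_iff_isSymmetric.1 hsa x x).symm
    have h2 := inner_conj_symm (𝕜 := ℂ) (T x) x
    rw [← h1] at h2
    exact Complex.conj_eq_iff_im.1 h2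
  have hre : c * ‖x‖ ^ 2 ≤ (⟪x, T x⟫).re := by
    rw [show ⟪x, T x⟫ = ⟪T x, x⟫ from
      (ContinuousLinearMap.isSelfAdjoint_iff_isSymmetric.1 hsa x x).symm]
    exact hcT x
  have h1 : s.re * (c * ‖x‖ ^ 2) ≤ (⟪s • x - z, T x⟫).re := by
    rw [inner_sub_left, inner_smul_left, Complex.sub_re, Complex.mul_re, him]
    simp only [Complex.conj_re, mul_zero, sub_zero]
    nlinarith
  have h2 : (⟪s • x - z, T x⟫).re ≤ ‖s • x - z‖ * ((‖T‖ + 1) * ‖x‖) := by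
    refine (Complex.re_le_norm _).trans ((norm_inner_le_norm _ _).trans ?_)
    gcongr
    refine (T.le_opNorm x).trans ?_
    gcongr
    linarith
  show ‖x‖ ≤ (‖T‖ + 1) / c / s.re * ‖s • x - z‖
  rcases (norm_nonneg x).eq_or_lt with h0 | h0
  · rw [← h0]; positivity
  · have h3 : ‖x‖ * (c * s.re) ≤ (‖T‖ + 1) * ‖s • x - z‖ := by
      refine le_of_mul_le_mul_right ?_ h0
      linarith [h1.trans h2]
    rw [div_div, div_mul_eq_mul_div, le_div_iff₀ (by positivity)]
    exact h3

lemma redBound_of_dissipative {A : (X₁ × X₂) →ₗ.[ℂ] (X₁ × X₂)} (hA : DissipativeProd A)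
    (E₁ Q₁ : X₁ ≃L[ℂ] X₁) (Q₂ : X₂ ≃L[ℂ] X₂)
    (hcoer : Coercive ((ContinuousLinearMap.adjoint (E₁ : X₁ →L[ℂ] X₁)).comp
      (Q₁ : X₁ →L[ℂ] X₁))) {s : ℂ} (hs : 0 < s.re) : redBound s E₁ Q₁ Q₂ A := by
  obtain ⟨K, hK, hb⟩ := redGraph_bound hA E₁ Q₁ Q₂ hcoer
  exact ⟨K / s.re, by positivity, fun x₁ x₂ h h0 => hb s hs _ (mem_redGraph_of_domain h h0)⟩

lemma redInj_of_dissipative {A : (X₁ × X₂) →ₗ.[ℂ] (X₁ × X₂)} (hA : DissipativeProd A)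
    (E₁ Q₁ : X₁ ≃L[ℂ] X₁) (Q₂ : X₂ ≃L[ℂ] X₂)
    (hcoer : Coercive ((ContinuousLinearMap.adjoint (E₁ : X₁ →L[ℂ] X₁)).comp
      (Q₁ : X₁ →L[ℂ] X₁))) {s : ℂ} (hs : 0 < s.re) : redInj s E₁ Q₁ Q₂ A := by
  obtain ⟨K, hK, hb⟩ := redGraph_bound hA E₁ Q₁ Q₂ hcoer
  intro x₁ x₁' x₂ x₂' h h' h0 h0' heq
  have h1 := hb s hs _ ((redGraph E₁ Q₁ Q₂ A).sub_mem (mem_redGraph_of_domain h h0)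
    (mem_redGraph_of_domain h' h0'))
  simp only [Prod.mk_sub_mk, smul_sub] at h1
  rw [sub_sub_sub_comm, heq, sub_self, norm_zero, mul_zero] at h1
  exact sub_eq_zero.1 (norm_le_zero_iff.1 h1)

/-! ### The pencil -/

/-- The graph of `(s E - A Q)⁻¹`: pairs `(y, x)` with `A Q x = s E x - y`. -/
def pencilInvGraph (s : ℂ) (E₁ Q₁ : X₁ ≃L[ℂ] X₁) (Q₂ : X₂ ≃L[ℂ] X₂)
    (A : (X₁ × X₂) →ₗ.[ℂ] (X₁ × X₂)) : Submodule ℂ ((X₁ × X₂) × (X₁ × X₂)) where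
  carrier := {p | (((Q₁ p.2.1, Q₂ p.2.2), (s • E₁ p.2.1 - p.1.1, - p.1.2)) :
    (X₁ × X₂) × (X₁ × X₂)) ∈ A.graph}
  zero_mem' := Submodule.mem_of_eq_mem (by simp) A.graph.zero_mem
  add_mem' := by
    intro p q hp hq
    refine Submodule.mem_of_eq_mem ?_ (A.graph.add_mem hp hq)
    simp only [Prod.mk_add_mk, Prod.fst_add, Prod.snd_add, map_add, smul_add, neg_add,
      add_sub_add_comm]
  smul_mem' := by
    intro c p hp
    refine Submodule.mem_of_eq_mem ?_ (A.graph.smul_mem c hp)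
    simp only [Prod.smul_mk, Prod.smul_fst, Prod.smul_snd, map_smul, smul_sub, smul_neg,
      smul_comm c s]

lemma mem_pencilInvGraph {s : ℂ} {E₁ Q₁ : X₁ ≃L[ℂ] X₁} {Q₂ : X₂ ≃L[ℂ] X₂}
    {A : (X₁ × X₂) →ₗ.[ℂ] (X₁ × X₂)} {y x : X₁ × X₂} :
    (y, x) ∈ pencilInvGraph s E₁ Q₁ Q₂ A ↔
      (((Q₁ x.1, Q₂ x.2), (s • E₁ x.1 - y.1, - y.2)) : (X₁ × X₂) × (X₁ × X₂)) ∈ A.graph :=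
  Iff.rfl

lemma pencilApply_eq_iff (s : ℂ) (E₁ Q₁ : X₁ ≃L[ℂ] X₁) (Q₂ : X₂ ≃L[ℂ] X₂)
    (A : (X₁ × X₂) →ₗ.[ℂ] (X₁ × X₂)) (x y : X₁ × X₂) :
    (∃ h : blockQ (Q₁ : X₁ →L[ℂ] X₁) (Q₂ : X₂ →L[ℂ] X₂) x ∈ A.domain,
      pencilApply s (blockE (E₁ : X₁ →L[ℂ] X₁))
        (blockQ (Q₁ : X₁ →L[ℂ] X₁) (Q₂ : X₂ →L[ℂ] X₂)) A ⟨x, h⟩ = y) ↔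
      (y, x) ∈ pencilInvGraph s E₁ Q₁ Q₂ A := by
  rw [mem_pencilInvGraph]
  constructor
  · rintro ⟨h, rfl⟩
    refine Submodule.mem_of_eq_mem ?_ (A.mem_graph ⟨_, h⟩)
    refine Prod.ext rfl ?_
    exact Prod.ext (by simp [pencilApply, blockE]) (by simp [pencilApply, blockE])
  · intro hm
    obtain ⟨⟨u, hu⟩, rfl, hAu⟩ := A.mem_graph_iff.1 hm
    refine ⟨hu, ?_⟩
    unfold pencilApply
    have e : A ⟨blockQ (Q₁ : X₁ →L[ℂ] X₁) (Q₂ : X₂ →L[ℂ] X₂) x, hu⟩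
      = (s • E₁ x.1 - y.1, - y.2) := hAu
    rw [e]
    exact Prod.ext (by simp [blockE]) (by simp [blockE])

/-- Bounded invertibility of the pencil in terms of its inverse relation; injectivity is a
consequence of the bound. -/
lemma pencilBddInv_iff (s : ℂ) (E₁ Q₁ : X₁ ≃L[ℂ] X₁) (Q₂ : X₂ ≃L[ℂ] X₂)
    (A : (X₁ × X₂) →ₗ.[ℂ] (X₁ × X₂)) :
    PencilBddInv s (blockE (E₁ : X₁ →L[ℂ] X₁))
        (blockQ (Q₁ : X₁ →L[ℂ] X₁) (Q₂ : X₂ →L[ℂ] X₂)) A ↔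
      (∀ y, ∃ x, (y, x) ∈ pencilInvGraph s E₁ Q₁ Q₂ A) ∧
        ∃ C : ℝ, 0 < C ∧ ∀ y x, (y, x) ∈ pencilInvGraph s E₁ Q₁ Q₂ A → ‖x‖ ≤ C * ‖y‖ := by
  constructor
  · rintro ⟨⟨-, hsurj⟩, C, hC, hb⟩
    refine ⟨fun y => ?_, C, hC, fun y x hm => ?_⟩
    · obtain ⟨⟨x, hx⟩, hy⟩ := hsurj y
      exact ⟨x, (pencilApply_eq_iff s E₁ Q₁ Q₂ A x y).1 ⟨hx, hy⟩⟩
    · obtain ⟨hx, rfl⟩ := (pencilApply_eq_iff s E₁ Q₁ Q₂ A x y).2 hm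
      exact hb ⟨x, hx⟩
  · rintro ⟨hsurj, C, hC, hb⟩
    refine ⟨⟨?_, fun y => ?_⟩, C, hC, ?_⟩
    · rintro ⟨x, hx⟩ ⟨x', hx'⟩ heq
      have hm := (pencilApply_eq_iff s E₁ Q₁ Q₂ A x _).1 ⟨hx, heq⟩
      have hm' := (pencilApply_eq_iff s E₁ Q₁ Q₂ A x' _).1 ⟨hx', rfl⟩
      have h := Submodule.sub_mem _ hm hm'
      rw [Prod.mk_sub_mk, sub_self] at h
      have h1 := hb _ _ h
      rw [norm_zero, mul_zero] at h1
      exact Subtype.ext (sub_eq_zero.1 (norm_le_zero_iff.1 h1))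
    · obtain ⟨x, hm⟩ := hsurj y
      obtain ⟨hx, hy⟩ := (pencilApply_eq_iff s E₁ Q₁ Q₂ A x y).2 hm
      exact ⟨⟨x, hx⟩, hy⟩
    · rintro ⟨x, hx⟩
      exact hb _ _ ((pencilApply_eq_iff s E₁ Q₁ Q₂ A x _).1 ⟨hx, rfl⟩)

lemma isClosed_pencilInvGraph (s : ℂ) (E₁ Q₁ : X₁ ≃L[ℂ] X₁) (Q₂ : X₂ ≃L[ℂ] X₂)
    {A : (X₁ × X₂) →ₗ.[ℂ] (X₁ × X₂)}
    (hA : IsClosed (A.graph : Set ((X₁ × X₂) × (X₁ × X₂)))) :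
    IsClosed (pencilInvGraph s E₁ Q₁ Q₂ A : Set ((X₁ × X₂) × (X₁ × X₂))) := by
  refine hA.preimage (f := fun p : (X₁ × X₂) × (X₁ × X₂) =>
    ((Q₁ p.2.1, Q₂ p.2.2), (s • E₁ p.2.1 - p.1.1, - p.1.2))) ?_
  fun_prop

/-- A closed linear relation that is the graph of a total, single-valued map is bounded. -/
lemma relation_bound_of_isClosed {X Y : Type*} [NormedAddCommGroup X] [NormedSpace ℂ X]
    [CompleteSpace X] [NormedAddCommGroup Y] [NormedSpace ℂ Y] [CompleteSpace Y]
    (G : Submodule ℂ (Y × X)) (hG : IsClosed (G : Set (Y × X)))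
    (hsurj : ∀ y, ∃ x, (y, x) ∈ G) (hinj : ∀ x, (0, x) ∈ G → x = 0) :
    ∃ C : ℝ, 0 < C ∧ ∀ y x, (y, x) ∈ G → ‖x‖ ≤ C * ‖y‖ := by
  choose r hr using hsurj
  have huniq : ∀ y x, (y, x) ∈ G → r y = x := by
    intro y x h
    have h1 := G.sub_mem (hr y) h
    rw [Prod.mk_sub_mk, sub_self] at h1
    exact sub_eq_zero.1 (hinj _ h1)
  let R : Y →ₗ[ℂ] X :=
    { toFun := r
      map_add' := fun u v => huniq _ _ (G.add_mem (hr u) (hr v))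
      map_smul' := fun c u => huniq _ _ (G.smul_mem c (hr u)) }
  have hgraph : (R.graph : Set (Y × X)) = G := by
    ext ⟨y, x⟩
    constructor
    · intro h
      have h' : x = r y := h
      rw [h']
      exact hr y
    · intro h
      exact (huniq y x h).symm
  have hcont : Continuous R := R.continuous_of_isClosed_graph (by rw [hgraph]; exact hG)
  let R' : Y →L[ℂ] X := ⟨R, hcont⟩
  refine ⟨‖R'‖ + 1, by positivity, fun y x h => ?_⟩
  have e : R' y = x := huniq y x h
  rw [← e]
  refine (R'.le_opNorm y).trans ?_
  gcongr
  linarith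

/-- A boundedly invertible pencil forces `A` to be closed. -/
lemma isClosed_graph_of_pencil {A : (X₁ × X₂) →ₗ.[ℂ] (X₁ × X₂)}
    {E₁ Q₁ : X₁ ≃L[ℂ] X₁} {Q₂ : X₂ ≃L[ℂ] X₂} {s : ℂ} {C : ℝ}
    (hsurj : ∀ y, ∃ x, (y, x) ∈ pencilInvGraph s E₁ Q₁ Q₂ A)
    (hb : ∀ y x, (y, x) ∈ pencilInvGraph s E₁ Q₁ Q₂ A → ‖x‖ ≤ C * ‖y‖) :
    IsClosed (A.graph : Set ((X₁ × X₂) × (X₁ × X₂))) := by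
  -- `A.graph` is the preimage of `pencilInvGraph` under `f : (u, v) ↦ (s E Q⁻¹ u - v, Q⁻¹ u)`.
  let f : (X₁ × X₂) × (X₁ × X₂) → (X₁ × X₂) × (X₁ × X₂) := fun p =>
    ((s • E₁ (Q₁.symm p.1.1) - p.2.1, - p.2.2), (Q₁.symm p.1.1, Q₂.symm p.1.2))
  have hf : Continuous f := by fun_prop
  have hpre : (A.graph : Set ((X₁ × X₂) × (X₁ × X₂))) =
      f ⁻¹' (pencilInvGraph s E₁ Q₁ Q₂ A : Set ((X₁ × X₂) × (X₁ × X₂))) := by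
    ext ⟨u, v⟩
    simp only [Set.mem_preimage, SetLike.mem_coe, f, mem_pencilInvGraph]
    simp
  rw [hpre]
  refine IsClosed.preimage hf (IsSeqClosed.isClosed ?_)
  rintro p ⟨y, x⟩ hp hlim
  obtain ⟨x', hsol⟩ := hsurj y
  have h1 : Filter.Tendsto (fun n => (p n).1) Filter.atTop (nhds y) :=
    (continuous_fst.tendsto _).comp hlim
  have h2 : Filter.Tendsto (fun n => (p n).2) Filter.atTop (nhds x) :=
    (continuous_snd.tendsto _).comp hlim
  have h3 : Filter.Tendsto (fun n => (p n).2) Filter.atTop (nhds x') := by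
    rw [tendsto_iff_norm_sub_tendsto_zero] at h1 ⊢
    refine squeeze_zero (fun _ => norm_nonneg _) (fun n => ?_) (by simpa using h1.const_mul C)
    exact hb _ _ (Submodule.sub_mem _ (hp n) hsol)
  rw [tendsto_nhds_unique h2 h3]
  exact hsol

/-- Lemma `L:11`: equivalent characterizations of regularity of `(E, AQ)`
via the reduced operator `A_red`. -/
theorem statement_18
    (A : (X₁ × X₂) →ₗ.[ℂ] (X₁ × X₂)) (hA : DissipativeProd A)
    (E₁ Q₁ : X₁ ≃L[ℂ] X₁) (Q₂ : X₂ ≃L[ℂ] X₂)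
    (hcoer : Coercive ((ContinuousLinearMap.adjoint (E₁ : X₁ →L[ℂ] X₁)).comp
      (Q₁ : X₁ →L[ℂ] X₁)))
    (hinj : ∀ (x₂ : X₂) (h : (((0 : X₁), x₂) : X₁ × X₂) ∈ A.domain),
      (A ⟨((0 : X₁), x₂), h⟩).2 = 0 → x₂ = 0) :
    -- (a) ↔ (b):
    ((∃ s : ℂ, 0 < s.re ∧ PencilBddInv s (blockE (E₁ : X₁ →L[ℂ] X₁))
        (blockQ (Q₁ : X₁ →L[ℂ] X₁) (Q₂ : X₂ →L[ℂ] X₂)) A) ↔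
      (IsClosed (A.graph : Set ((X₁ × X₂) × (X₁ × X₂))) ∧
        (∀ y₂ : X₂, ∃ x : A.domain, (A x).2 = y₂) ∧
        ∃ s : ℂ, 0 < s.re ∧
          redSurj s E₁ Q₁ Q₂ A ∧ redInj s E₁ Q₁ Q₂ A ∧ redBound s E₁ Q₁ Q₂ A)) ∧
    -- (b) ↔ (c):
    ((IsClosed (A.graph : Set ((X₁ × X₂) × (X₁ × X₂))) ∧
        (∀ y₂ : X₂, ∃ x : A.domain, (A x).2 = y₂) ∧
        ∃ s : ℂ, 0 < s.re ∧
          redSurj s E₁ Q₁ Q₂ A ∧ redInj s E₁ Q₁ Q₂ A ∧ redBound s E₁ Q₁ Q₂ A) ↔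
      (IsClosed (A.graph : Set ((X₁ × X₂) × (X₁ × X₂))) ∧
        (∀ y₂ : X₂, ∃ x : A.domain, (A x).2 = y₂) ∧
        ∃ s : ℂ, 0 < s.re ∧ redSurj s E₁ Q₁ Q₂ A)) ∧
    -- (c) ↔ (d):
    ((IsClosed (A.graph : Set ((X₁ × X₂) × (X₁ × X₂))) ∧
        (∀ y₂ : X₂, ∃ x : A.domain, (A x).2 = y₂) ∧
        ∃ s : ℂ, 0 < s.re ∧ redSurj s E₁ Q₁ Q₂ A) ↔
      (IsClosed (A.graph : Set ((X₁ × X₂) × (X₁ × X₂))) ∧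
        (∀ y₂ : X₂, ∃ x : A.domain, (A x).2 = y₂) ∧
        (redDissip E₁ Q₁ Q₂ A ∧ ∃ l : ℝ, 0 < l ∧ redSurj (l : ℂ) E₁ Q₁ Q₂ A))) := by
  have hbc : ∀ s : ℂ, 0 < s.re → redInj s E₁ Q₁ Q₂ A ∧ redBound s E₁ Q₁ Q₂ A := fun s hs =>
    ⟨redInj_of_dissipative hA E₁ Q₁ Q₂ hcoer hs, redBound_of_dissipative hA E₁ Q₁ Q₂ hcoer hs⟩
  refine ⟨⟨?_, ?_⟩, ⟨?_, ?_⟩, ⟨?_, ?_⟩⟩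
  · rintro ⟨s, hs, hP⟩
    obtain ⟨hsurj, C, hC, hb⟩ := (pencilBddInv_iff s E₁ Q₁ Q₂ A).1 hP
    refine ⟨isClosed_graph_of_pencil hsurj hb, fun y₂ => ?_, s, hs, ?_, hbc s hs⟩
    · obtain ⟨x, hm⟩ := hsurj (0, -y₂)
      obtain ⟨u, -, hAu⟩ := A.mem_graph_iff.1 (mem_pencilInvGraph.1 hm)
      exact ⟨u, by rw [hAu]; simp⟩
    · refine (redSurj_iff s E₁ Q₁ Q₂ A).2 fun y => ?_
      obtain ⟨x, hm⟩ := hsurj (E₁ y, 0)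
      refine ⟨(x.1, s • x.1 - y), ⟨x.2, ?_⟩, by simp⟩
      simpa using mem_pencilInvGraph.1 hm
  · rintro ⟨hcl, hA₂, s, hs, hsurj, hrinj, -⟩
    refine ⟨s, hs, (pencilBddInv_iff s E₁ Q₁ Q₂ A).2 ?_⟩
    have hPsurj : ∀ y, ∃ x, (y, x) ∈ pencilInvGraph s E₁ Q₁ Q₂ A := by
      rintro ⟨y₁, y₂⟩
      -- The solution `Q⁻¹ u` for the second component is corrected by `(w, w₂)`, on which `A₂ ∘ Q`
      -- vanishes.
      obtain ⟨u, hu⟩ := hA₂ (-y₂)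
      obtain ⟨⟨w, z⟩, ⟨w₂, hw⟩, hwz⟩ := (redSurj_iff s E₁ Q₁ Q₂ A).1 hsurj
        (E₁.symm (y₁ - (s • E₁ (Q₁.symm (u : X₁ × X₂).1) - (A u).1)))
      refine ⟨(Q₁.symm (u : X₁ × X₂).1 + w, Q₂.symm (u : X₁ × X₂).2 + w₂), ?_⟩
      have h := A.graph.add_mem (A.mem_graph u) hw
      rw [mem_pencilInvGraph]
      have hz := congrArg E₁ hwz
      simp only [map_sub, map_smul, ContinuousLinearEquiv.apply_symm_apply] at hz
      refine Submodule.mem_of_eq_mem (Prod.ext ?_ ?_) h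
      · exact Prod.ext (by simp) (by simp)
      · refine Prod.ext ?_ (by simp [hu])
        simp only [map_add, smul_add, Prod.mk_add_mk, Prod.fst_add]
        have hz' : s • E₁ w = y₁ - (s • E₁ (Q₁.symm (u : X₁ × X₂).1) - (A u).1) + E₁ z :=
          sub_eq_iff_eq_add.1 hz
        rw [hz']
        abel
    refine ⟨hPsurj, relation_bound_of_isClosed _ (isClosed_pencilInvGraph s E₁ Q₁ Q₂ hcl)
      hPsurj ?_⟩
    rintro ⟨x₁, x₂⟩ hm
    have hm1 := mem_pencilInvGraph.1 hm
    obtain ⟨⟨u, hu⟩, rfl, hAu⟩ := A.mem_graph_iff.1 hm1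
    have hd0 : ((Q₁ 0, Q₂ 0) : X₁ × X₂) ∈ A.domain := by
      rw [map_zero, map_zero]; exact A.domain.zero_mem
    have hA0 : A ⟨(Q₁ 0, Q₂ 0), hd0⟩ = 0 := by
      have e : (⟨(Q₁ 0, Q₂ 0), hd0⟩ : A.domain) = 0 := Subtype.ext (by simp)
      rw [e, A.map_zero]
    have hx₁ : x₁ = 0 := by
      refine hrinj x₁ 0 x₂ 0 hu hd0 (by rw [hAu]; simp) (by rw [hA0]; rfl) ?_
      rw [hAu, hA0]
      simp
    subst hx₁
    have hx₂ : Q₂ x₂ = 0 := by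
      have hm2 : (((0, Q₂ x₂), (0, 0)) : (X₁ × X₂) × (X₁ × X₂)) ∈ A.graph := by
        simpa using hm1
      obtain ⟨⟨u, hu⟩, rfl, hAu⟩ := A.mem_graph_iff.1 hm2
      exact hinj _ hu (by rw [hAu])
    exact Prod.ext rfl (by simpa using hx₂)
  · rintro ⟨hcl, hA₂, s, hs, hsurj, -⟩
    exact ⟨hcl, hA₂, s, hs, hsurj⟩
  · rintro ⟨hcl, hA₂, s, hs, hsurj⟩
    exact ⟨hcl, hA₂, s, hs, hsurj, hbc s hs⟩
  · rintro ⟨hcl, hA₂, s, hs, hsurj⟩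
    refine ⟨hcl, hA₂, redDissip_of_dissipative hA E₁ Q₁ Q₂, s.re, hs, ?_⟩
    obtain ⟨K, hK, hb⟩ := redGraph_bound hA E₁ Q₁ Q₂ hcoer
    rw [redSurj_iff] at hsurj ⊢
    exact relation_surj_real _ (C := K / s.re) (by positivity)
      (fun z hz p hp => by simpa [hz] using hb z (by rw [hz]; exact hs) p hp) hsurj
  · rintro ⟨hcl, hA₂, -, l, hl, hsurj⟩
    exact ⟨hcl, hA₂, l, by simpa using hl, hsurj⟩
end
end

section
/- Let X₁, X₂ be complex Hilbert spaces, X = X₁ × X₂, A a dissipative linear operator on X with domain D(A) and components A = (A₁, A₂), E(x₁,x₂) = (E₁x₁, 0), Q(x₁,x₂) = (Q₁x₁, Q₂x₂) with E₁, Q₁, Q₂ bounded and boundedly invertible and E₁*Q₁ coercive, and assume there exists s₀ ∈ ℂ with Re s₀ > 0 such that s₀·E − A∘Q is boundedly invertible. Define W₀ = {x₁ ∈ X₁ : ∃ x₂ ∈ X₂, (Q₁x₁, Q₂x₂) ∈ D(A) and A₂(Q₁x₁, Q₂x₂) = 0} and let X₀ be the closure of W₀ in X₁. Assume: the only y₁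 ∈ X₀ for which there exists x₂ ∈ X₂ with (0, Q₂x₂) ∈ D(A) and A(0, Q₂x₂) = (E₁ y₁, 0) is y₁ = 0. Define D(A_red) = {x₁ ∈ X₀ : ∃ x₂ ∈ X₂, (Q₁x₁, Q₂x₂) ∈ D(A), A₂(Q₁x₁, Q₂x₂) = 0, and E₁⁻¹ A₁(Q₁x₁, Q₂x₂) ∈ X₀} and A_red x₁ = E₁⁻¹ A₁(Q₁x₁, Q₂x₂). Then: (1) A_red is well-defined (its value does not depend on the choice of x₂); (2) A_red is dissipative with respect to the inner product ⟨x, y⟩_{EQ} = ⟨x, E₁*Q₁ y⟩, i.e., Re⟨A_red x₁, E₁*Q₁ x₁⟩ ≤ 0 for all x₁ ∈ D(A_red); (3) s₀·I − A_red : D(A_red) → X₀ is surjective. In particular, A_red is maximally dissipative on X₀ equipped with ⟨·,·⟩_{EQ}. -/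
/-!
The set `W₀` is a linear subspace of `X₁`, so its closure `X₀` is one too.

* Well-definedness: two admissible values of `A_red x₁` differ by some `y₁ ∈ X₀` with
  `A (0, Q₂ (x₂ - x₂')) = (E₁ y₁, 0)`, and the kernel hypothesis gives `y₁ = 0`.
* Dissipativity: `E₁` cancels, `⟨E₁⁻¹ A₁, E₁* Q₁ x₁⟩ = ⟨A₁, Q₁ x₁⟩`, and since `A₂ = 0` this is the
  full product `⟨A Q x, Q x⟩`, whose real part is nonpositive.
* Surjectivity: solving `(s₀ E - A Q) x = (E₁ y₁, 0)` gives `A₂ (Q x) = 0`, so `x₁ ∈ W₀`, and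
  `E₁⁻¹ A₁ (Q x) = s₀ x₁ - y₁` lies in the subspace `X₀`.
-/

noncomputable section

open Complex ContinuousLinearMap
open scoped ComplexInnerProductSpace

variable {X₁ X₂ : Type*}
  [NormedAddCommGroup X₁] [InnerProductSpace ℂ X₁] [CompleteSpace X₁]
  [NormedAddCommGroup X₂] [InnerProductSpace ℂ X₂] [CompleteSpace X₂]

/-- The set `W₀`: first components of the kernel of the constraint `A₂ (Q₁ ·, Q₂ ·)`. -/
def W0 (Q₁ : X₁ ≃L[ℂ] X₁) (Q₂ : X₂ ≃L[ℂ] X₂)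
    (A : (X₁ × X₂) →ₗ.[ℂ] (X₁ × X₂)) : Set X₁ :=
  {x₁ | ∃ (x₂ : X₂) (h : ((Q₁ x₁, Q₂ x₂) : X₁ × X₂) ∈ A.domain),
    (A ⟨(Q₁ x₁, Q₂ x₂), h⟩).2 = 0}

/-- `W₀` as a linear subspace of `X₁`. -/
def W0Submodule (Q₁ : X₁ ≃L[ℂ] X₁) (Q₂ : X₂ ≃L[ℂ] X₂)
    (A : (X₁ × X₂) →ₗ.[ℂ] (X₁ × X₂)) : Submodule ℂ X₁ where
  carrier := W0 Q₁ Q₂ A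
  zero_mem' := by
    have e : ((Q₁ 0, Q₂ 0) : X₁ × X₂) = 0 := by simp
    have h : ((Q₁ 0, Q₂ 0) : X₁ × X₂) ∈ A.domain := e ▸ A.domain.zero_mem
    refine ⟨0, h, ?_⟩
    have : (⟨(Q₁ 0, Q₂ 0), h⟩ : A.domain) = 0 := Subtype.ext e
    rw [this, A.map_zero]
    rfl
  add_mem' := by
    rintro a b ⟨a₂, ha, ha0⟩ ⟨b₂, hb, hb0⟩
    have e : ((Q₁ (a + b), Q₂ (a₂ + b₂)) : X₁ × X₂) = (Q₁ a, Q₂ a₂) + (Q₁ b, Q₂ b₂) := by simp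
    have h : ((Q₁ (a + b), Q₂ (a₂ + b₂)) : X₁ × X₂) ∈ A.domain := e ▸ A.domain.add_mem ha hb
    refine ⟨a₂ + b₂, h, ?_⟩
    have : (⟨_, h⟩ : A.domain) = ⟨_, ha⟩ + ⟨_, hb⟩ := Subtype.ext e
    rw [this, A.map_add, Prod.snd_add, ha0, hb0, add_zero]
  smul_mem' := by
    rintro c a ⟨a₂, ha, ha0⟩
    have e : ((Q₁ (c • a), Q₂ (c • a₂)) : X₁ × X₂) = c • (Q₁ a, Q₂ a₂) := by simp
    have h : ((Q₁ (c • a), Q₂ (c • a₂)) : X₁ × X₂) ∈ A.domain := e ▸ A.domain.smul_mem c ha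
    refine ⟨c • a₂, h, ?_⟩
    have : (⟨_, h⟩ : A.domain) = c • ⟨_, ha⟩ := Subtype.ext e
    rw [this, A.map_smul, Prod.smul_snd, ha0, smul_zero]

theorem sub_mem_closure_W0 {Q₁ : X₁ ≃L[ℂ] X₁} {Q₂ : X₂ ≃L[ℂ] X₂}
    {A : (X₁ × X₂) →ₗ.[ℂ] (X₁ × X₂)} {a b : X₁} (ha : a ∈ closure (W0 Q₁ Q₂ A))
    (hb : b ∈ closure (W0 Q₁ Q₂ A)) : a - b ∈ closure (W0 Q₁ Q₂ A) :=
  (W0Submodule Q₁ Q₂ A).topologicalClosure.sub_mem ha hb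

theorem smul_mem_closure_W0 {Q₁ : X₁ ≃L[ℂ] X₁} {Q₂ : X₂ ≃L[ℂ] X₂}
    {A : (X₁ × X₂) →ₗ.[ℂ] (X₁ × X₂)} {a : X₁} (c : ℂ) (ha : a ∈ closure (W0 Q₁ Q₂ A)) :
    c • a ∈ closure (W0 Q₁ Q₂ A) :=
  (W0Submodule Q₁ Q₂ A).topologicalClosure.smul_mem c ha

/-- Theorem `T:6`: on `X₀ = closure W₀`, the reduced operator `A_red` is well
defined, dissipative for `⟨x, y⟩_{EQ} = ⟨x, E₁* Q₁ y⟩`, and `s₀ I - A_red` is surjective onto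
`X₀`; in particular `A_red` is maximally dissipative on `(X₀, ⟨·,·⟩_{EQ})`. -/
theorem statement_19
    (A : (X₁ × X₂) →ₗ.[ℂ] (X₁ × X₂)) (hA : DissipativeProd A)
    (E₁ Q₁ : X₁ ≃L[ℂ] X₁) (Q₂ : X₂ ≃L[ℂ] X₂)
    (hcoer : Coercive ((ContinuousLinearMap.adjoint (E₁ : X₁ →L[ℂ] X₁)).comp
      (Q₁ : X₁ →L[ℂ] X₁)))
    (s₀ : ℂ) (hs₀ : 0 < s₀.re)
    (hreg : PencilBddInv s₀ (blockE (E₁ : X₁ →L[ℂ] X₁))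
      (blockQ (Q₁ : X₁ →L[ℂ] X₁) (Q₂ : X₂ →L[ℂ] X₂)) A)
    -- the only `y₁ ∈ X₀` with `A (0, Q₂ x₂) = (E₁ y₁, 0)` for some `x₂` is `y₁ = 0`:
    (hker : ∀ y₁ ∈ closure (W0 Q₁ Q₂ A),
      (∃ (x₂ : X₂) (h : (((0 : X₁), Q₂ x₂) : X₁ × X₂) ∈ A.domain),
        A ⟨((0 : X₁), Q₂ x₂), h⟩ = ((E₁ y₁, (0 : X₂)) : X₁ × X₂)) → y₁ = 0) :
    -- (1) `A_red` is well defined (independent of the choice of `x₂`):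
    (∀ (x₁ : X₁) (x₂ x₂' : X₂)
        (h : ((Q₁ x₁, Q₂ x₂) : X₁ × X₂) ∈ A.domain)
        (h' : ((Q₁ x₁, Q₂ x₂') : X₁ × X₂) ∈ A.domain),
      x₁ ∈ closure (W0 Q₁ Q₂ A) →
      (A ⟨(Q₁ x₁, Q₂ x₂), h⟩).2 = 0 → (A ⟨(Q₁ x₁, Q₂ x₂'), h'⟩).2 = 0 →
      E₁.symm ((A ⟨(Q₁ x₁, Q₂ x₂), h⟩).1) ∈ closure (W0 Q₁ Q₂ A) →
      E₁.symm ((A ⟨(Q₁ x₁, Q₂ x₂'), h'⟩).1) ∈ closure (W0 Q₁ Q₂ A) →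
      E₁.symm ((A ⟨(Q₁ x₁, Q₂ x₂), h⟩).1) = E₁.symm ((A ⟨(Q₁ x₁, Q₂ x₂'), h'⟩).1)) ∧
    -- (2) `A_red` is dissipative for `⟨·,·⟩_{EQ}`:
    (∀ (x₁ : X₁) (x₂ : X₂) (h : ((Q₁ x₁, Q₂ x₂) : X₁ × X₂) ∈ A.domain),
      x₁ ∈ closure (W0 Q₁ Q₂ A) →
      (A ⟨(Q₁ x₁, Q₂ x₂), h⟩).2 = 0 →
      E₁.symm ((A ⟨(Q₁ x₁, Q₂ x₂), h⟩).1) ∈ closure (W0 Q₁ Q₂ A) →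
      (⟪E₁.symm ((A ⟨(Q₁ x₁, Q₂ x₂), h⟩).1),
        ((ContinuousLinearMap.adjoint (E₁ : X₁ →L[ℂ] X₁)).comp (Q₁ : X₁ →L[ℂ] X₁)) x₁⟫).re
        ≤ 0) ∧
    -- (3) `s₀ I - A_red` is surjective onto `X₀ = closure W₀`:
    (∀ y₁ ∈ closure (W0 Q₁ Q₂ A),
      ∃ (x₁ : X₁) (x₂ : X₂) (h : ((Q₁ x₁, Q₂ x₂) : X₁ × X₂) ∈ A.domain),
        x₁ ∈ closure (W0 Q₁ Q₂ A) ∧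
        (A ⟨(Q₁ x₁, Q₂ x₂), h⟩).2 = 0 ∧
        E₁.symm ((A ⟨(Q₁ x₁, Q₂ x₂), h⟩).1) ∈ closure (W0 Q₁ Q₂ A) ∧
        s₀ • x₁ - E₁.symm ((A ⟨(Q₁ x₁, Q₂ x₂), h⟩).1) = y₁) := by
  refine ⟨?_, ?_, ?_⟩
  · intro x₁ x₂ x₂' h h' _ h0 h0' hm hm'
    have e : (((0 : X₁), Q₂ (x₂ - x₂')) : X₁ × X₂) = (Q₁ x₁, Q₂ x₂) - (Q₁ x₁, Q₂ x₂') := by simp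
    have hd : (((0 : X₁), Q₂ (x₂ - x₂')) : X₁ × X₂) ∈ A.domain := e ▸ A.domain.sub_mem h h'
    have hs : (⟨_, hd⟩ : A.domain) = ⟨_, h⟩ - ⟨_, h'⟩ := Subtype.ext e
    refine sub_eq_zero.mp (hker _ (sub_mem_closure_W0 hm hm') ⟨x₂ - x₂', hd, ?_⟩)
    rw [hs, A.map_sub]
    ext
    · simp
    · simp [h0, h0']
  · intro x₁ x₂ h _ h0 _
    have hd := hA ⟨_, h⟩
    rw [ContinuousLinearMap.comp_apply, ContinuousLinearMap.adjoint_inner_right]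
    simpa [reInner2, h0] using hd
  · intro y₁ hy
    obtain ⟨⟨⟨x₁, x₂⟩, h⟩, hx⟩ := hreg.1.2 (E₁ y₁, 0)
    have h1 : s₀ • E₁ x₁ - (A ⟨(Q₁ x₁, Q₂ x₂), h⟩).1 = E₁ y₁ := congrArg Prod.fst hx
    have h2 : s₀ • (0 : X₂) - (A ⟨(Q₁ x₁, Q₂ x₂), h⟩).2 = 0 := congrArg Prod.snd hx
    have h0 : (A ⟨(Q₁ x₁, Q₂ x₂), h⟩).2 = 0 := by simpa using h2
    have hx₁ : x₁ ∈ closure (W0 Q₁ Q₂ A) := subset_closure ⟨x₂, h, h0⟩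
    have h3 : E₁.symm (A ⟨(Q₁ x₁, Q₂ x₂), h⟩).1 = s₀ • x₁ - y₁ := by
      rw [ContinuousLinearEquiv.symm_apply_eq, map_sub, map_smul, ← h1, sub_sub_cancel]
    refine ⟨x₁, x₂, h, hx₁, h0, ?_, ?_⟩
    · rw [h3]
      exact sub_mem_closure_W0 (smul_mem_closure_W0 s₀ hx₁) hy
    · rw [h3, sub_sub_cancel]
end
end
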